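/- Let φ_0 : [0,s_0] → [0,s_1] and φ_1 : [0,s_1] → [0,s_2] be grafting functions. Then the composition φ_1 ∘ φ_0 is a grafting function. -/

import Mathlib

open Set

/-- `φ` is a grafting function from `[0, s₀]` to `[0, s₁]`: there are countable sets
`X⁺ ⊆ [0, s₀)`, `X⁻ ⊆ [0, s₀]` and summable positive weights `δ⁺, δ⁻` on them such that
`φ(t) = t + ∑_{x < t, x ∈ X⁺} δ⁺(x) + ∑_{x ≤ t, x ∈ X⁻} δ⁻(x)` for `t ∈ [0, s₀]`,
and `φ` maps `[0, s₀]` into `[0, s₁]`. -/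
def IsGraftingFunction (s₀ s₁ : ℝ) (φ : ℝ → ℝ) : Prop :=
  ∃ (Xp Xm : Set ℝ) (δp δm : ℝ → ℝ),
    Xp.Countable ∧ Xm.Countable ∧
    Xp ⊆ Ico 0 s₀ ∧ Xm ⊆ Icc 0 s₀ ∧
    (∀ x ∈ Xp, 0 < δp x) ∧ (∀ x ∈ Xm, 0 < δm x) ∧
    Summable (fun x : Xp => δp x) ∧ Summable (fun x : Xm => δm x) ∧
    (∀ t ∈ Icc 0 s₀,
      φ t = t + (∑' x : ↥(Xp ∩ Iio t), δp x) + (∑' x : ↥(Xm ∩ Iic t), δm x)) ∧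
    (∀ t ∈ Icc 0 s₀, φ t ∈ Icc 0 s₁)

theorem graft_fiber {ι : Type} (a : ι → ℝ) (w : ι → ℝ) (hw : Summable w) (T : Set ℝ) :
    HasSum (fun x : ℝ => (range a ∩ T).indicator (fun x => ∑' b : a ⁻¹' {x}, w b) x)
      (∑' i, (a ⁻¹' T).indicator w i) := by
  have h := (hw.indicator (a ⁻¹' T)).hasSum.tsum_fiberwise a
  refine (congrArg (fun f => HasSum f (∑' i, (a ⁻¹' T).indicator w i)) ?_).mpr h
  funext x
  by_cases hx : x ∈ T
  · by_cases hr : x ∈ range a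
    · rw [indicator_of_mem (show x ∈ range a ∩ T from ⟨hr, hx⟩)]
      refine tsum_congr fun b => ?_
      have hb : a b = x := b.2
      rw [indicator_of_mem]
      simpa [hb] using hx
    · rw [indicator_of_notMem (fun h => hr h.1)]
      have : IsEmpty (a ⁻¹' {x}) := ⟨fun b => hr ⟨b, b.2⟩⟩
      simp
  · rw [indicator_of_notMem (fun h => hx h.2)]
    symm
    convert tsum_zero with b
    have hb : a b = x := b.2
    rw [indicator_of_notMem]
    simpa [hb] using hx

theorem graft_pos {ι : Type} (a : ι → ℝ) (w : ι → ℝ) (hw : Summable w) (hp : ∀ i, 0 < w i) :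
    ∀ x ∈ range a, 0 < ∑' b : a ⁻¹' {x}, w b := by
  rintro x ⟨i, rfl⟩
  exact (hw.subtype (a ⁻¹' {a i})).tsum_pos (fun b => (hp b.1).le) ⟨i, rfl⟩ (hp i)

theorem graft_summable {ι : Type} (a : ι → ℝ) (w : ι → ℝ) (hw : Summable w) :
    Summable (fun x : range a => ∑' b : a ⁻¹' {(x : ℝ)}, w b) := by
  have h := (graft_fiber a w hw univ).summable
  rw [inter_univ] at h
  exact summable_subtype_iff_indicator.2 h

theorem graft_general {ι : Type} [Countable ι] (s₀ s₁ : ℝ) (φ : ℝ → ℝ) (w : ι → ℝ)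
    (hw : Summable w) (hp : ∀ i, 0 < w i) (U : ι → Set ℝ)
    (hU : ∀ i, ∀ s ∈ Icc 0 s₀, ∀ t ∈ Icc 0 s₀, s ≤ t → s ∈ U i → t ∈ U i)
    (hφ : ∀ t ∈ Icc 0 s₀, φ t = t + ∑' i, {i | t ∈ U i}.indicator w i)
    (hm : ∀ t ∈ Icc 0 s₀, φ t ∈ Icc 0 s₁) : IsGraftingFunction s₀ s₁ φ := by
  set a : ι → ℝ := fun i => sInf (U i ∩ Icc 0 s₀) with ha
  have hbdd : ∀ i, BddBelow (U i ∩ Icc 0 s₀) := fun i => ⟨0, fun x hx => hx.2.1⟩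
  have hale : ∀ i, ∀ t ∈ U i ∩ Icc 0 s₀, a i ≤ t := fun i t ht => csInf_le (hbdd i) ht
  have ha0 : ∀ i, (U i ∩ Icc 0 s₀).Nonempty → 0 ≤ a i :=
    fun i hi => le_csInf hi fun x hx => hx.2.1
  set P : Set ι := {i | (U i ∩ Icc 0 s₀).Nonempty ∧ a i ∉ U i} with hP
  set M : Set ι := {i | (U i ∩ Icc 0 s₀).Nonempty ∧ a i ∈ U i} with hM
  have hgt : ∀ i, (U i ∩ Icc 0 s₀).Nonempty → ∀ t ∈ Icc 0 s₀, a i < t → t ∈ U i := by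
    intro i hi t ht hlt
    obtain ⟨u, hu, hut⟩ := exists_lt_of_csInf_lt hi hlt
    exact hU i u hu.2 t ht hut.le hu.1
  have hais : ∀ i, (U i ∩ Icc 0 s₀).Nonempty → a i ∈ Icc 0 s₀ := by
    intro i hi
    obtain ⟨u, hu⟩ := id hi
    exact ⟨ha0 i hi, (hale i u hu).trans hu.2.2⟩
  let aP : P → ℝ := fun i => a i
  let aM : M → ℝ := fun i => a i
  have hwP : Summable (fun i : P => w i) := hw.subtype P
  have hwM : Summable (fun i : M => w i) := hw.subtype M
  refine ⟨range aP, range aM, fun x => ∑' b : aP ⁻¹' {x}, w b, fun x => ∑' b : aM ⁻¹' {x}, w b,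
    countable_range _, countable_range _, ?_, ?_, graft_pos aP _ hwP fun i => hp i,
    graft_pos aM _ hwM fun i => hp i, graft_summable aP _ hwP, graft_summable aM _ hwM, ?_, hm⟩
  · rintro _ ⟨⟨i, hi, hn⟩, rfl⟩
    refine ⟨ha0 i hi, ?_⟩
    obtain ⟨u, hu⟩ := id hi
    refine lt_of_lt_of_le (lt_of_le_of_ne (hale i u hu) ?_) hu.2.2
    intro h
    have h' : a i = u := h
    exact hn (h'.symm ▸ hu.1)
  · rintro _ ⟨⟨i, hi, hn⟩, rfl⟩
    exact hais i hi
  · intro t ht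
    rw [hφ t ht, add_assoc]
    congr 1
    rw [tsum_subtype (range aP ∩ Iio t) (fun x => ∑' b : aP ⁻¹' {x}, w b),
      tsum_subtype (range aM ∩ Iic t) (fun x => ∑' b : aM ⁻¹' {x}, w b),
      (graft_fiber aP _ hwP (Iio t)).tsum_eq, (graft_fiber aM _ hwM (Iic t)).tsum_eq]
    have e1 : ∑' i : P, (aP ⁻¹' Iio t).indicator (fun i : P => w i) i
        = ∑' i, (P ∩ a ⁻¹' Iio t).indicator w i := by
      rw [← indicator_indicator, ← tsum_subtype P]
      rfl
    have e2 : ∑' i : M, (aM ⁻¹' Iic t).indicator (fun i : M => w i) i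
        = ∑' i, (M ∩ a ⁻¹' Iic t).indicator w i := by
      rw [← indicator_indicator, ← tsum_subtype M]
      rfl
    rw [e1, e2, ← (hw.indicator _).tsum_add (hw.indicator _)]
    refine tsum_congr fun i => ?_
    by_cases hi : (U i ∩ Icc 0 s₀).Nonempty
    · by_cases hai : a i ∈ U i
      · have h1 : i ∉ P ∩ a ⁻¹' Iio t := fun h => h.1.2 hai
        rw [indicator_of_notMem h1, zero_add]
        have : t ∈ U i ↔ i ∈ M ∩ a ⁻¹' Iic t :=
          ⟨fun h => ⟨⟨hi, hai⟩, hale i t ⟨h, ht⟩⟩,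
            fun h => hU i _ (hais i hi) t ht h.2 hai⟩
        by_cases h : t ∈ U i
        · rw [indicator_of_mem (this.1 h), indicator_of_mem (show i ∈ {i | t ∈ U i} from h)]
        · rw [indicator_of_notMem (fun h' => h (this.2 h')),
            indicator_of_notMem (show i ∉ {i | t ∈ U i} from h)]
      · have h1 : i ∉ M ∩ a ⁻¹' Iic t := fun h => hai h.1.2
        rw [indicator_of_notMem h1, add_zero]
        have : t ∈ U i ↔ i ∈ P ∩ a ⁻¹' Iio t :=
          ⟨fun h => ⟨⟨hi, hai⟩, lt_of_le_of_ne (hale i t ⟨h, ht⟩) fun e => hai (e ▸ h)⟩,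
            fun h => hgt i hi t ht h.2⟩
        by_cases h : t ∈ U i
        · rw [indicator_of_mem (this.1 h), indicator_of_mem (show i ∈ {i | t ∈ U i} from h)]
        · rw [indicator_of_notMem (fun h' => h (this.2 h')),
            indicator_of_notMem (show i ∉ {i | t ∈ U i} from h)]
    · rw [indicator_of_notMem (show i ∉ {i | t ∈ U i} from fun h => hi ⟨t, h, ht⟩), indicator_of_notMem (fun h => hi h.1.1),
        indicator_of_notMem (fun h => hi h.1.1), add_zero]

theorem graft_sub (X T : Set ℝ) (δ : ℝ → ℝ) :
    ∑' x : ↥(X ∩ T), δ x = ∑' x : X, {x : X | (x : ℝ) ∈ T}.indicator (fun x : X => δ x) x := by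
  rw [tsum_subtype (X ∩ T) δ, ← indicator_indicator, ← tsum_subtype X]
  rfl

theorem graft_mono {s₀ s₁ : ℝ} {φ : ℝ → ℝ} (h : IsGraftingFunction s₀ s₁ φ) :
    ∀ s ∈ Icc 0 s₀, ∀ t ∈ Icc 0 s₀, s ≤ t → φ s ≤ φ t := by
  obtain ⟨Xp, Xm, δp, δm, -, -, -, -, hp, hm, sp, sm, hφ, -⟩ := h
  intro s hs t ht hst
  rw [hφ s hs, hφ t ht]
  simp only [graft_sub]
  refine add_le_add (add_le_add hst ?_) ?_
  · refine (sp.indicator _).tsum_le_tsum (fun x => ?_) (sp.indicator _)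
    exact indicator_le_indicator_of_subset (f := fun y : Xp => δp y)
      (fun (y : Xp) (hy : (y : ℝ) < s) => lt_of_lt_of_le hy hst)
      (fun y : Xp => (hp y.1 y.2).le) x
  · refine (sm.indicator _).tsum_le_tsum (fun x => ?_) (sm.indicator _)
    exact indicator_le_indicator_of_subset (f := fun y : Xm => δm y)
      (fun (y : Xm) (hy : (y : ℝ) ≤ s) => le_trans hy hst)
      (fun y : Xm => (hm y.1 y.2).le) x

/-- The composition of two grafting functions is a grafting function. -/
theorem isGraftingFunction_comp
    (s₀ s₁ s₂ : ℝ) (φ₀ φ₁ : ℝ → ℝ)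
    (h₀ : IsGraftingFunction s₀ s₁ φ₀) (h₁ : IsGraftingFunction s₁ s₂ φ₁) :
    IsGraftingFunction s₀ s₂ (φ₁ ∘ φ₀) := by
  have mono := graft_mono h₀
  obtain ⟨Xp, Xm, δp, δm, cp, cm, -, -, hp, hm, sp, sm, hφ, hmap⟩ := h₀
  obtain ⟨Yp, Ym, εp, εm, cp', cm', -, -, hp', hm', sp', sm', hφ', hmap'⟩ := h₁
  have := cp.to_subtype
  have := cm.to_subtype
  have := cp'.to_subtype
  have := cm'.to_subtype
  let w : (Xp ⊕ Xm) ⊕ (Yp ⊕ Ym) → ℝ :=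
    Sum.elim (Sum.elim (fun x => δp x) (fun x => δm x)) (Sum.elim (fun x => εp x) (fun x => εm x))
  let U : (Xp ⊕ Xm) ⊕ (Yp ⊕ Ym) → Set ℝ :=
    Sum.elim (Sum.elim (fun x => {t | (x : ℝ) < t}) (fun x => {t | (x : ℝ) ≤ t}))
      (Sum.elim (fun x => {t | (x : ℝ) < φ₀ t}) (fun x => {t | (x : ℝ) ≤ φ₀ t}))
  have hw : Summable w := by
    exact Summable.sum _ (Summable.sum _ sp sm) (Summable.sum _ sp' sm')
  refine graft_general s₀ s₂ _ w hw ?_ U ?_ ?_ fun t ht => hmap' _ (hmap t ht)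
  · rintro ((x | x) | (x | x))
    exacts [hp x x.2, hm x x.2, hp' x x.2, hm' x x.2]
  · rintro ((x | x) | (x | x)) s hs t ht hst h
    · exact lt_of_lt_of_le (show (x : ℝ) < s from h) hst
    · exact le_trans (show (x : ℝ) ≤ s from h) hst
    · exact lt_of_lt_of_le (show (x : ℝ) < φ₀ s from h) (mono s hs t ht hst)
    · exact le_trans (show (x : ℝ) ≤ φ₀ s from h) (mono s hs t ht hst)
  · intro t ht
    have hs := hw.indicator {i | t ∈ U i}
    rw [Function.comp_apply, hφ' _ (hmap t ht)]
    have q1 := sp.indicator {x : Xp | (x : ℝ) ∈ Iio t}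
    have q2 := sm.indicator {x : Xm | (x : ℝ) ∈ Iic t}
    have q3 := sp'.indicator {x : Yp | (x : ℝ) ∈ Iio (φ₀ t)}
    have q4 := sm'.indicator {x : Ym | (x : ℝ) ∈ Iic (φ₀ t)}
    have key := ((q1.hasSum.sum (f := fun i => {i | t ∈ U i}.indicator w (Sum.inl i)) q2.hasSum).sum
      (f := {i | t ∈ U i}.indicator w)
      (q3.hasSum.sum (f := fun i => {i | t ∈ U i}.indicator w (Sum.inr i)) q4.hasSum)).tsum_eq
    rw [key]
    simp only [← graft_sub]
    have := hφ t ht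
    linarith
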